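/- arXiv:1202.0909 — 3 statements merged into one kernel-verified Lean document; each statement's English description precedes it below -/
import Mathlib

section
/- Let d ≥ 2 be an integer. Let (M_n(1),…,M_n(m)) be the occupancy counts of the uniform occupancy model with n balls and m urns, let p = 1/(m−1), and for i ≠ j define a_{n,m}(i,j) = C(M_n(i)−d, d−M_n(j)) · p^{d−M_n(j)} · (1−p)^{M_n(i)+M_n(j)−2d} · 1{M_n(i)+M_n(j) ≥ 2d, M_n(j) < d}. Then there exist an integer n₁, a real r₁ > 0, and a constant C, all depending only on d, such that for all n ≥ n₁ and all m ≥ 2 with r_{n,m} ≥ r₁, Var(Σ_{1 ≤ i,j ≤ m, i≠j} a_{n,m}(i,j)) ≤ C·n·[1 + (n/m)⁴]. -/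
open MeasureTheory ProbabilityTheory

/-- The uniform occupancy model: `n` balls are placed independently and uniformly at
random into `m` urns. -/
noncomputable def occ (n m : ℕ) : Measure (Fin n → Fin m) :=
  (Fintype.card (Fin n → Fin m) : ENNReal)⁻¹ • Measure.count

/-- The number of balls in urn `i`. -/
def ballCount {n m : ℕ} (ω : Fin n → Fin m) (i : Fin m) : ℕ :=
  (Finset.univ.filter fun b => ω b = i).card

/-- The number of urns containing exactly `d` balls. -/
def urnCount (d : ℕ) {n m : ℕ} (ω : Fin n → Fin m) : ℕ :=
  (Finset.univ.filter fun i => ballCount ω i = d).card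

/-- `μ_{n,m}`, the mean number of urns containing exactly `d` balls. -/
noncomputable def occMean (d n m : ℕ) : ℝ :=
  ∫ ω, (urnCount d ω : ℝ) ∂(occ n m)


/-- `σ²_{n,m}`, the variance of the number of urns containing exactly `d` balls. -/
noncomputable def occVar (d n m : ℕ) : ℝ :=
  variance (fun ω => (urnCount d ω : ℝ)) (occ n m)

/-- `r_{n,m} = σ_{n,m} / (1 + (n/m)³)`. -/
noncomputable def occR (d n m : ℕ) : ℝ :=
  Real.sqrt (occVar d n m) / (1 + ((n : ℝ) / m) ^ 3)

/-- The summand `a_{n,m}(i,j)` of Lemma 3.3, Equation (3.14). -/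
noncomputable def aTerm (d n m : ℕ) (ω : Fin n → Fin m) (i j : Fin m) : ℝ :=
  if 2 * d ≤ ballCount ω i + ballCount ω j ∧ ballCount ω j < d then
    ((ballCount ω i - d).choose (d - ballCount ω j) : ℝ)
      * (1 / ((m : ℝ) - 1)) ^ (d - ballCount ω j)
      * (1 - 1 / ((m : ℝ) - 1)) ^ (ballCount ω i + ballCount ω j - 2 * d)
  else 0

/-!
By the Efron–Stein inequality the variance is at most `∑ k, E (f - f_k) ^ 2`, where `f_k` is the
same sum over the configuration without ball `k`. Deleting a ball changes only the terms that
involve its urn, and each term is a binomial probability, which Markov's inequality bounds by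
`2 / m` times the count of its first urn; hence `|f - f_k| ≤ 2 N + 2 n / m`, with `N` the number of
balls in the urn of ball `k`. That urn is independent of the other balls, so the second moment of
`N` reduces to that of the count of a fixed urn, which is again controlled by Efron–Stein.
-/

section EfronStein

variable {α β : Type*} [MeasurableSpace α] [MeasurableSpace β] {μ : Measure α} {ν : Measure β}

theorem variance_le_integral_sq_sub_const [IsProbabilityMeasure μ] {X : α → ℝ}
    (hX : AEStronglyMeasurable X μ) (c : ℝ) : Var[X; μ] ≤ ∫ x, (X x - c) ^ 2 ∂μ := by
  rw [← variance_sub_const hX c]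
  exact variance_le_expectation_sq (hX.sub aestronglyMeasurable_const)

theorem sq_integral_le_integral_sq [IsProbabilityMeasure μ] {X : α → ℝ} (hX : MemLp X 2 μ) :
    (∫ x, X x ∂μ) ^ 2 ≤ ∫ x, X x ^ 2 ∂μ :=
  sub_nonneg.1 <| (variance_nonneg X μ).trans_eq (variance_eq_sub hX)

theorem ae_memLp_two_prodMk_left [SFinite μ] [SFinite ν] {f : α × β → ℝ}
    (hf : MemLp f 2 (μ.prod ν)) :
    ∀ᵐ x ∂μ, MemLp (fun y => f (x, y)) 2 ν := by
  filter_upwards [hf.aestronglyMeasurable.prodMk_left, hf.integrable_sq.prod_right_ae]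
    with x hmeas hsq
  exact (memLp_two_iff_integrable_sq hmeas).2 hsq

theorem memLp_two_integral_prodMk_left [SFinite μ] [IsProbabilityMeasure ν] {f : α × β → ℝ}
    (hf : MemLp f 2 (μ.prod ν)) : MemLp (fun x => ∫ y, f (x, y) ∂ν) 2 μ := by
  have hmeas : AEStronglyMeasurable (fun x => ∫ y, f (x, y) ∂ν) μ :=
    hf.aestronglyMeasurable.integral_prod_right'
  rw [memLp_two_iff_integrable_sq hmeas]
  refine hf.integrable_sq.integral_prod_left.mono' (hmeas.pow 2) ?_
  filter_upwards [ae_memLp_two_prodMk_left hf] with x hx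
  rw [Real.norm_of_nonneg (sq_nonneg _)]
  exact sq_integral_le_integral_sq hx

theorem variance_prod_eq [IsProbabilityMeasure μ] [IsProbabilityMeasure ν] {f : α × β → ℝ}
    (hf : MemLp f 2 (μ.prod ν)) :
    Var[f; μ.prod ν] =
      ∫ x, Var[fun y => f (x, y); ν] ∂μ + Var[fun x => ∫ y, f (x, y) ∂ν; μ] := by
  have hmean := memLp_two_integral_prodMk_left hf
  have hcond : ∫ x, Var[fun y => f (x, y); ν] ∂μ =
      ∫ x, (∫ y, f (x, y) ^ 2 ∂ν - (∫ y, f (x, y) ∂ν) ^ 2) ∂μ := by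
    refine integral_congr_ae ?_
    filter_upwards [ae_memLp_two_prodMk_left hf] with x hx
    exact variance_eq_sub hx
  rw [hcond, integral_sub hf.integrable_sq.integral_prod_left hmean.integrable_sq,
    variance_eq_sub hf, variance_eq_sub hmean]
  simp only [Pi.pow_apply]
  rw [integral_prod _ hf.integrable_sq, integral_prod _ (hf.integrable one_le_two)]
  ring

theorem integral_sq_integral_sub_integral_le [SFinite μ] [IsProbabilityMeasure ν]
    {f g : α × β → ℝ} (hf : MemLp f 2 (μ.prod ν)) (hg : MemLp g 2 (μ.prod ν)) :
    ∫ x, (∫ y, f (x, y) ∂ν - ∫ y, g (x, y) ∂ν) ^ 2 ∂μ ≤ ∫ z, (f z - g z) ^ 2 ∂μ.prod ν := by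
  have hsq : Integrable (fun z => (f z - g z) ^ 2) (μ.prod ν) := (hf.sub hg).integrable_sq
  rw [integral_prod _ hsq]
  refine integral_mono_of_nonneg (.of_forall fun _ => sq_nonneg _) hsq.integral_prod_left ?_
  filter_upwards [ae_memLp_two_prodMk_left hf, ae_memLp_two_prodMk_left hg] with x hfx hgx
  rw [← integral_sub (hfx.integrable one_le_two) (hgx.integrable one_le_two)]
  exact sq_integral_le_integral_sq (hfx.sub hgx)

theorem integral_variance_prodMk_left_le [SFinite μ] [IsProbabilityMeasure ν]
    {f : α × β → ℝ} {h : α → ℝ} (hf : MemLp f 2 (μ.prod ν)) (hh : MemLp h 2 μ) :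
    ∫ x, Var[fun y => f (x, y); ν] ∂μ ≤ ∫ z, (f z - h z.1) ^ 2 ∂μ.prod ν := by
  have hsq : Integrable (fun z => (f z - h z.1) ^ 2) (μ.prod ν) :=
    (hf.sub (hh.comp_measurePreserving measurePreserving_fst)).integrable_sq
  rw [integral_prod _ hsq]
  refine integral_mono_of_nonneg (.of_forall fun _ => variance_nonneg _ _)
    hsq.integral_prod_left ?_
  filter_upwards [ae_memLp_two_prodMk_left hf] with x hx
  exact variance_le_integral_sq_sub_const hx.aestronglyMeasurable (h x)

theorem variance_pi_fin_le_sum_integral_sq_sub {n : ℕ} {Ω : Fin n → Type*}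
    [∀ k, MeasurableSpace (Ω k)] {P : ∀ k, Measure (Ω k)} [∀ k, IsProbabilityMeasure (P k)]
    {f : (∀ k, Ω k) → ℝ} {g : Fin n → (∀ k, Ω k) → ℝ}
    (hf : MemLp f 2 (Measure.pi P)) (hg : ∀ k, MemLp (g k) 2 (Measure.pi P))
    (hgk : ∀ k, DependsOn (g k) {k}ᶜ) :
    Var[f; Measure.pi P] ≤ ∑ k, ∫ ω, (f ω - g k ω) ^ 2 ∂Measure.pi P := by
  induction n with
  | zero =>
    have hconst : f = fun _ => f default := funext fun x => congrArg f (Subsingleton.elim _ _)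
    rw [hconst, variance_eq_integral aemeasurable_const]
    simp
  | succ n ih =>
    let P' (k : Fin n) : Measure (Ω (Fin.succAbove 0 k)) := P (Fin.succAbove 0 k)
    have (k : Fin n) : IsProbabilityMeasure (P' k) :=
      inferInstanceAs (IsProbabilityMeasure (P (Fin.succAbove 0 k)))
    let e := MeasurableEquiv.prodComm.trans (MeasurableEquiv.piFinSuccAbove Ω 0).symm
    have he : MeasurePreserving e ((Measure.pi P').prod (P 0)) (Measure.pi P) :=
      ((measurePreserving_piFinSuccAbove P 0).symm _).comp Measure.measurePreserving_swap
    have hfe : MemLp (fun z => f (e z)) 2 _ := hf.comp_measurePreserving he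
    have hge (k) : MemLp (fun z => g k (e z)) 2 _ := (hg k).comp_measurePreserving he
    have hg_zero (z) : ∫ y, g 0 (e (z.1, y)) ∂P 0 = g 0 (e z) :=
      have hconst (y) : g 0 (e (z.1, y)) = g 0 (e z) :=
        hgk 0 (Fin.cases (fun h => absurd rfl h) fun _ _ => rfl)
      (integral_congr_ae (.of_forall hconst)).trans (by simp)
    have hg_succ (k : Fin n) :
        DependsOn (fun x : ∀ j : Fin n, Ω (Fin.succAbove 0 j) => ∫ y, g k.succ (e (x, y)) ∂P 0)
          {k}ᶜ :=
      fun x x' hx => integral_congr_ae <| .of_forall fun y => hgk k.succ <|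
        Fin.cases (fun _ => rfl) fun i hi => hx i fun h => hi (congrArg Fin.succ h)
    have hvar := integral_variance_prodMk_left_le hfe (memLp_two_integral_prodMk_left (hge 0))
    have hmean : Var[fun x => ∫ y, f (e (x, y)) ∂P 0; Measure.pi P'] ≤
        ∑ k : Fin n, ∫ z, (f (e z) - g k.succ (e z)) ^ 2 ∂(Measure.pi P').prod (P 0) :=
      (ih (memLp_two_integral_prodMk_left hfe)
        (fun k => memLp_two_integral_prodMk_left (hge k.succ)) hg_succ).trans <|
        Finset.sum_le_sum fun k _ => integral_sq_integral_sub_integral_le hfe (hge k.succ)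
    simp only [hg_zero] at hvar
    rw [← he.variance_fun_comp hf.aestronglyMeasurable.aemeasurable, variance_prod_eq hfe,
      Fin.sum_univ_succ]
    simp only [← he.integral_comp']
    exact add_le_add hvar hmean

theorem variance_pi_le_sum_integral_sq_sub {ι : Type*} [Fintype ι] {Ω : ι → Type*}
    [∀ k, MeasurableSpace (Ω k)] {P : ∀ k, Measure (Ω k)} [∀ k, IsProbabilityMeasure (P k)]
    {f : (∀ k, Ω k) → ℝ} {g : ι → (∀ k, Ω k) → ℝ}
    (hf : MemLp f 2 (Measure.pi P)) (hg : ∀ k, MemLp (g k) 2 (Measure.pi P))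
    (hgk : ∀ k, DependsOn (g k) {k}ᶜ) :
    Var[f; Measure.pi P] ≤ ∑ k, ∫ ω, (f ω - g k ω) ^ 2 ∂Measure.pi P := by
  let e : Fin (Fintype.card ι) ≃ ι := (Fintype.equivFin ι).symm
  have he := measurePreserving_piCongrLeft P e
  rw [← he.variance_fun_comp hf.aestronglyMeasurable.aemeasurable, ← e.sum_comp]
  simp only [← he.integral_comp']
  refine variance_pi_fin_le_sum_integral_sq_sub (hf.comp_measurePreserving he)
    (fun k => (hg (e k)).comp_measurePreserving he) fun k x y hxy => hgk (e k) ?_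
  refine e.surjective.forall.2 fun i hi => ?_
  simpa only [MeasurableEquiv.coe_piCongrLeft, Equiv.piCongrLeft_apply_apply] using
    hxy i fun h => hi (congrArg e h)

end EfronStein

section Resampling

variable {ι : Type*} [Fintype ι] {Ω : ι → Type*} [∀ k, MeasurableSpace (Ω k)]

theorem measurePreserving_update [DecidableEq ι] (P : ∀ k, Measure (Ω k))
    [∀ k, IsProbabilityMeasure (P k)] (k : ι) :
    MeasurePreserving (fun z : (∀ k, Ω k) × Ω k => Function.update z.1 k z.2)
      ((Measure.pi P).prod (P k)) (Measure.pi P) := by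
  refine ⟨measurable_update', (Measure.pi_eq fun s hs => ?_).symm⟩
  have hpreimage : (fun z : (∀ k, Ω k) × Ω k => Function.update z.1 k z.2) ⁻¹' Set.univ.pi s =
      Set.univ.pi (Function.update s k Set.univ) ×ˢ s k := by
    ext z
    simp only [Set.mem_preimage, Set.mem_prod, Set.mem_univ_pi]
    rw [Function.forall_update_iff z.1 fun i x => x ∈ s i,
      Function.forall_update_iff s fun i t => z.1 i ∈ t]
    simp [and_comm]
  have hprod : ∏ i, P i (Function.update s k Set.univ i) =
      ∏ i ∈ Finset.univ.erase k, P i (s i) := by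
    rw [← Finset.mul_prod_erase _ _ (Finset.mem_univ k), Function.update_self, measure_univ,
      one_mul]
    exact Finset.prod_congr rfl fun i hi => by
      rw [Function.update_of_ne (Finset.ne_of_mem_erase hi)]
  rw [Measure.map_apply measurable_update' (MeasurableSet.univ_pi hs), hpreimage,
    Measure.prod_prod, Measure.pi_pi, hprod, Finset.prod_erase_mul _ _ (Finset.mem_univ k)]

theorem integral_pi_eq_integral_integral {P : ∀ k, Measure (Ω k)}
    [∀ k, IsProbabilityMeasure (P k)] {k : ι} {φ : Ω k → (∀ k, Ω k) → ℝ}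
    (hφ : ∀ a, DependsOn (φ a) {k}ᶜ)
    (hint : Integrable (fun ω => φ (ω k) ω) (Measure.pi P)) :
    ∫ ω, φ (ω k) ω ∂Measure.pi P = ∫ ω, ∫ a, φ a ω ∂P k ∂Measure.pi P := by
  classical
  have he := measurePreserving_update P k
  have hupdate (z : (∀ k, Ω k) × Ω k) :
      φ (Function.update z.1 k z.2 k) (Function.update z.1 k z.2) = φ z.2 z.1 := by
    rw [Function.update_self]
    exact hφ _ fun i hi => Function.update_of_ne hi _ _
  calc ∫ ω, φ (ω k) ω ∂Measure.pi P
      = ∫ z, φ (Function.update z.1 k z.2 k) (Function.update z.1 k z.2)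
          ∂(Measure.pi P).prod (P k) := by
        rw [← integral_map (f := fun ω => φ (ω k) ω) he.aemeasurable
          (he.map_eq.symm ▸ hint.aestronglyMeasurable), he.map_eq]
    _ = ∫ z, φ z.2 z.1 ∂(Measure.pi P).prod (P k) := by simp only [hupdate]
    _ = ∫ ω, ∫ a, φ a ω ∂P k ∂Measure.pi P :=
        integral_prod _ <| (he.integrable_comp_of_integrable hint).congr (.of_forall hupdate)

end Resampling

section Occupancy

variable {n m : ℕ}

theorem occ_eq_pi_uniformOn (n m : ℕ) : occ n m = Measure.pi fun _ => uniformOn Set.univ := by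
  rw [← uniformOn_pi, Set.pi_univ]
  ext s -
  simp [occ, uniformOn_univ, ENNReal.div_eq_inv_mul]

instance isProbabilityMeasure_uniformOn_univ {α : Type*} [Finite α] [Nonempty α]
    [MeasurableSpace α] [MeasurableSingletonClass α] :
    IsProbabilityMeasure (uniformOn (Set.univ : Set α)) :=
  isProbabilityMeasure_uniformOn Set.finite_univ Set.univ_nonempty

instance isProbabilityMeasure_occ [NeZero m] : IsProbabilityMeasure (occ n m) := by
  rw [occ_eq_pi_uniformOn]
  infer_instance

theorem integral_uniformOn_univ {α : Type*} [Fintype α] [MeasurableSpace α]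
    [MeasurableSingletonClass α] (f : α → ℝ) :
    ∫ a, f a ∂uniformOn Set.univ = (∑ a, f a) / Fintype.card α := by
  have hf : Integrable f (uniformOn Set.univ) := Integrable.of_finite
  rw [integral_fintype hf]
  simp [measureReal_def, uniformOn_univ, Finset.sum_div, inv_mul_eq_div]

theorem integral_occ_eq_integral_sum_div [NeZero m] {k : Fin n}
    {φ : Fin m → (Fin n → Fin m) → ℝ} (hφ : ∀ i, DependsOn (φ i) {k}ᶜ) :
    ∫ ω, φ (ω k) ω ∂occ n m = (∑ i, ∫ ω, φ i ω ∂occ n m) / m := by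
  rw [occ_eq_pi_uniformOn, integral_pi_eq_integral_integral hφ .of_finite]
  simp only [integral_uniformOn_univ, Fintype.card_fin]
  rw [integral_div, integral_finsetSum _ fun _ _ => .of_finite]

theorem integral_occ_eval [NeZero m] (k : Fin n) (f : Fin m → ℝ) :
    ∫ ω, f (ω k) ∂occ n m = (∑ i, f i) / m := by
  rw [integral_occ_eq_integral_sum_div (φ := fun i _ => f i) fun _ _ _ _ => rfl]
  simp

theorem variance_occ_le_sum_integral_sq_sub [NeZero m] {f : (Fin n → Fin m) → ℝ}
    {g : Fin n → (Fin n → Fin m) → ℝ} (hg : ∀ k, DependsOn (g k) {k}ᶜ) :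
    Var[f; occ n m] ≤ ∑ k, ∫ ω, (f ω - g k ω) ^ 2 ∂occ n m := by
  rw [occ_eq_pi_uniformOn]
  exact variance_pi_le_sum_integral_sq_sub .of_discrete (fun _ => .of_discrete) hg

/-- The number of balls other than `k` in urn `i`. -/
def ballCountErase (k : Fin n) (ω : Fin n → Fin m) (i : Fin m) : ℕ :=
  ((Finset.univ.erase k).filter fun b => ω b = i).card

theorem dependsOn_ballCountErase (k : Fin n) : DependsOn (ballCountErase (m := m) k) {k}ᶜ := by
  intro ω ω' h
  funext i
  refine congrArg Finset.card (Finset.filter_congr fun b hb => ?_)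
  rw [h b (Finset.ne_of_mem_erase hb)]

theorem ballCount_eq_ballCountErase_add (k : Fin n) (ω : Fin n → Fin m) (i : Fin m) :
    ballCount ω i = ballCountErase k ω i + if ω k = i then 1 else 0 := by
  simp only [ballCount, ballCountErase, Finset.card_filter,
    Finset.sum_erase_add _ _ (Finset.mem_univ k)]

theorem ballCount_eq_sum (ω : Fin n → Fin m) (i : Fin m) :
    (ballCount ω i : ℝ) = ∑ b, if ω b = i then 1 else 0 := by
  simp [ballCount]

theorem sum_ballCount (ω : Fin n → Fin m) : ∑ i, (ballCount ω i : ℝ) = n := by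
  simp_rw [ballCount_eq_sum]
  rw [Finset.sum_comm]
  simp

theorem integral_ballCount [NeZero m] (i : Fin m) :
    ∫ ω, (ballCount ω i : ℝ) ∂occ n m = n / m := by
  simp_rw [ballCount_eq_sum]
  rw [integral_finsetSum _ fun _ _ => .of_finite]
  simp [integral_occ_eval (f := fun a => if a = i then (1 : ℝ) else 0), div_eq_mul_inv]

theorem variance_ballCount_le [NeZero m] (i : Fin m) :
    Var[fun ω => (ballCount ω i : ℝ); occ n m] ≤ n / m := by
  calc _ ≤ ∑ k, ∫ ω, ((ballCount ω i : ℝ) - ballCountErase k ω i) ^ 2 ∂occ n m :=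
        variance_occ_le_sum_integral_sq_sub fun k ω ω' h => by
          rw [dependsOn_ballCountErase k h]
    _ = ∑ k : Fin n, ∫ ω, (if ω k = i then (1 : ℝ) else 0) ∂occ n m := by
        refine Finset.sum_congr rfl fun k _ => integral_congr_ae (.of_forall fun ω => ?_)
        simp [ballCount_eq_ballCountErase_add k ω i]
    _ = n / m := by
        simp [integral_occ_eval (f := fun a => if a = i then (1 : ℝ) else 0), div_eq_mul_inv]

theorem integral_sq_ballCount_le [NeZero m] (i : Fin m) :
    ∫ ω, (ballCount ω i : ℝ) ^ 2 ∂occ n m ≤ (n / m : ℝ) ^ 2 + n / m := by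
  have hvar := variance_ballCount_le (n := n) i
  rw [variance_eq_sub .of_discrete, integral_ballCount] at hvar
  exact sub_le_iff_le_add'.1 hvar

theorem integral_sq_ballCountErase_apply_le [NeZero m] (k : Fin n) :
    ∫ ω, (ballCountErase k ω (ω k) : ℝ) ^ 2 ∂occ n m ≤ (n / m : ℝ) ^ 2 + n / m := by
  have hle (i : Fin m) :
      ∫ ω, (ballCountErase k ω i : ℝ) ^ 2 ∂occ n m ≤ (n / m : ℝ) ^ 2 + n / m := by
    refine (integral_mono .of_finite .of_finite fun ω => ?_).trans (integral_sq_ballCount_le i)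
    gcongr
    exact (ballCount_eq_ballCountErase_add k ω i).symm ▸ Nat.le_add_right _ _
  rw [integral_occ_eq_integral_sum_div (φ := fun i ω => (ballCountErase k ω i : ℝ) ^ 2)
    fun i ω ω' h => by simp only [dependsOn_ballCountErase k h],
    div_le_iff₀ (Nat.cast_pos.2 (NeZero.pos m)), mul_comm, ← nsmul_eq_mul]
  simpa using Finset.sum_le_card_nsmul Finset.univ _ _ fun i _ => hle i

end Occupancy

section Kernel

variable {p : ℝ}

theorem choose_mul_pow_mul_pow_le (hp₀ : 0 ≤ p) (hp₁ : p ≤ 1) (k : ℕ) {l : ℕ}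
    (hl : l ≠ 0) : (k.choose l : ℝ) * p ^ l * (1 - p) ^ (k - l) ≤ k * p := by
  let b (ν : ℕ) : ℝ := k.choose ν * p ^ ν * (1 - p) ^ (k - ν)
  have hb (ν : ℕ) : 0 ≤ b ν := by
    have := sub_nonneg.2 hp₁
    positivity
  have hmean : ∑ ν ∈ Finset.range (k + 1), ν * b ν = k * p := by
    simpa [b, bernsteinPolynomial, Polynomial.eval_finsetSum] using
      congrArg (Polynomial.eval p) (bernsteinPolynomial.sum_smul ℝ k)
  rcases lt_or_ge k l with hlk | hlk
  · rw [Nat.choose_eq_zero_of_lt hlk, Nat.cast_zero, zero_mul, zero_mul]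
    positivity
  calc b l ≤ l * b l :=
        le_mul_of_one_le_left (hb l) (Nat.one_le_cast.2 (Nat.one_le_iff_ne_zero.2 hl))
    _ ≤ ∑ ν ∈ Finset.range (k + 1), ν * b ν :=
        Finset.single_le_sum (f := fun ν : ℕ => ν * b ν)
          (fun ν _ => mul_nonneg ν.cast_nonneg (hb ν)) (Finset.mem_range_succ_iff.2 hlk)
    _ = k * p := hmean

/-- The summand `a_{n,m}(i,j)` as a function of the two occupancy counts `x = M_n(i)` and
`y = M_n(j)`, with the success probability `p` left free; `aTerm` is the case `p = 1 / (m - 1)`. -/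
noncomputable def aKernel (d : ℕ) (p : ℝ) (x y : ℕ) : ℝ :=
  if 2 * d ≤ x + y ∧ y < d then
    ((x - d).choose (d - y) : ℝ) * p ^ (d - y) * (1 - p) ^ (x + y - 2 * d)
  else 0

theorem aKernel_nonneg (d : ℕ) (hp₀ : 0 ≤ p) (hp₁ : p ≤ 1) (x y : ℕ) : 0 ≤ aKernel d p x y := by
  have := sub_nonneg.2 hp₁
  unfold aKernel
  positivity

theorem aKernel_le (d : ℕ) (hp₀ : 0 ≤ p) (hp₁ : p ≤ 1) (x y : ℕ) : aKernel d p x y ≤ x * p := by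
  unfold aKernel
  split_ifs with h
  · have hexp : x + y - 2 * d = x - d - (d - y) := by omega
    rw [hexp]
    refine (choose_mul_pow_mul_pow_le hp₀ hp₁ _ (Nat.sub_pos_of_lt h.2).ne').trans ?_
    gcongr
    exact Nat.sub_le x d
  · positivity

end Kernel

section PairSum

variable {ι α : Type*} [Fintype ι] [DecidableEq ι]

/-- The sum of `K` over the ordered pairs of distinct entries of the family `M`. -/
def pairSum (K : α → α → ℝ) (M : ι → α) : ℝ :=
  ∑ i, ∑ j, if i ≠ j then K (M i) (M j) else 0

theorem abs_pairSum_sub_le {K : α → α → ℝ} {w : α → ℝ} (hK₀ : ∀ x y, 0 ≤ K x y)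
    (hKw : ∀ x y, K x y ≤ w x) {M M' : ι → α} {s : ι} (hs : w (M' s) ≤ w (M s))
    (hne : ∀ i ≠ s, M' i = M i) :
    |pairSum K M - pairSum K M'| ≤ Fintype.card ι * w (M s) + ∑ i, w (M i) := by
  have hw (x) : 0 ≤ w x := (hK₀ x x).trans (hKw x x)
  have hwM (i) : w (M' i) ≤ w (M i) := by
    rcases eq_or_ne i s with rfl | hi
    exacts [hs, (congrArg w (hne i hi)).le]
  have hterm (i j : ι) :
      |(if i ≠ j then K (M i) (M j) else 0) - (if i ≠ j then K (M' i) (M' j) else 0)| ≤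
        (if i = s then w (M s) else 0) + if j = s then w (M i) else 0 := by
    have hdiff : |K (M i) (M j) - K (M' i) (M' j)| ≤ w (M i) :=
      abs_sub_le_of_nonneg_of_le (hK₀ _ _) (hKw _ _) (hK₀ _ _) ((hKw _ _).trans (hwM i))
    by_cases hij : i = j
    · rw [if_neg (not_not.2 hij), if_neg (not_not.2 hij), sub_zero, abs_zero]
      exact add_nonneg (ite_nonneg (hw _) le_rfl) (ite_nonneg (hw _) le_rfl)
    rw [if_pos hij, if_pos hij]
    by_cases hi : i = s
    · have hj : j ≠ s := fun hj => hij (hi.trans hj.symm)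
      simpa only [hi, if_pos, if_neg hj, add_zero] using hdiff
    by_cases hj : j = s
    · simpa only [hj, if_pos, if_neg hi, zero_add] using hdiff
    · simp [hi, hj, hne i hi, hne j hj]
  calc |pairSum K M - pairSum K M'|
      = |∑ i, ∑ j, ((if i ≠ j then K (M i) (M j) else 0) -
          if i ≠ j then K (M' i) (M' j) else 0)| := by
        simp only [pairSum, Finset.sum_sub_distrib]
    _ ≤ ∑ i, ∑ j, ((if i = s then w (M s) else 0) + if j = s then w (M i) else 0) :=
        (Finset.abs_sum_le_sum_abs _ _).trans <| Finset.sum_le_sum fun i _ =>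
          (Finset.abs_sum_le_sum_abs _ _).trans <| Finset.sum_le_sum fun j _ => hterm i j
    _ = Fintype.card ι * w (M s) + ∑ i, w (M i) := by
        simp [Finset.sum_add_distrib]

end PairSum

section Variance

variable {n m : ℕ}

/-- The sum of `a_{n,m}(i,j)` over `i ≠ j` as a function of the occupancy counts `M`, so that it
can also be evaluated at the counts left after deleting a ball. -/
noncomputable def aSum (d : ℕ) (M : Fin m → ℕ) : ℝ :=
  pairSum (aKernel d (1 / ((m : ℝ) - 1))) M

theorem aSum_ballCount (d : ℕ) (ω : Fin n → Fin m) :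
    aSum d (ballCount ω) = ∑ i, ∑ j, if i ≠ j then aTerm d n m ω i j else 0 :=
  rfl

theorem abs_aSum_ballCount_sub_le (d : ℕ) (hm : 2 ≤ m) (k : Fin n) (ω : Fin n → Fin m) :
    |aSum d (ballCount ω) - aSum d (ballCountErase k ω)| ≤
      2 * ballCount ω (ω k) + 2 * (n / m) := by
  have hmR : (2 : ℝ) ≤ m := by exact_mod_cast hm
  have hp₀ : 0 ≤ 1 / ((m : ℝ) - 1) := div_nonneg zero_le_one (by linarith)
  have hp₁ : 1 / ((m : ℝ) - 1) ≤ 1 := by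
    rw [div_le_one (by linarith)]
    linarith
  have hp : 1 / ((m : ℝ) - 1) ≤ 2 / m := by
    rw [div_le_div_iff₀ (by linarith) (by linarith)]
    linarith
  refine (abs_pairSum_sub_le (w := fun x : ℕ => x * (2 / m : ℝ)) (s := ω k)
    (aKernel_nonneg d hp₀ hp₁) (fun x y => (aKernel_le d hp₀ hp₁ x y).trans ?_) ?_
    fun i hi => ?_).trans_eq ?_
  · gcongr
  · gcongr
    exact (ballCount_eq_ballCountErase_add k ω _).symm ▸ Nat.le_add_right _ _
  · rw [ballCount_eq_ballCountErase_add k, if_neg hi.symm, add_zero]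
  · rw [← Finset.sum_mul, sum_ballCount, Fintype.card_fin]
    field_simp

theorem integral_sq_aSum_ballCount_sub_le (d : ℕ) (hm : 2 ≤ m) (k : Fin n) :
    ∫ ω, (aSum d (ballCount ω) - aSum d (ballCountErase k ω)) ^ 2 ∂occ n m ≤
      30 * (1 + (n / m : ℝ) ^ 2) := by
  have : NeZero m := ⟨by omega⟩
  set t : ℝ := n / m
  have hpoint (ω : Fin n → Fin m) :
      (aSum d (ballCount ω) - aSum d (ballCountErase k ω)) ^ 2 ≤
        12 * ((ballCountErase k ω (ω k) : ℝ) ^ 2 + (1 + t ^ 2)) := by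
    have habs := abs_aSum_ballCount_sub_le d hm k ω
    rw [ballCount_eq_ballCountErase_add k, if_pos rfl] at habs
    push_cast at habs
    set x := (ballCountErase k ω (ω k) : ℝ)
    calc _ ≤ (2 * (x + 1) + 2 * t) ^ 2 := sq_le_sq.2 (habs.trans (le_abs_self _))
      _ ≤ 12 * (x ^ 2 + (1 + t ^ 2)) := by
        nlinarith [sq_nonneg (x - 1), sq_nonneg (x - t), sq_nonneg (t - 1)]
  calc _ ≤ ∫ ω, 12 * ((ballCountErase k ω (ω k) : ℝ) ^ 2 + (1 + t ^ 2)) ∂occ n m :=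
        integral_mono .of_finite .of_finite hpoint
    _ = 12 * (∫ ω, (ballCountErase k ω (ω k) : ℝ) ^ 2 ∂occ n m + (1 + t ^ 2)) := by
        rw [integral_const_mul, integral_add .of_finite .of_finite]
        simp
    _ ≤ 12 * (t ^ 2 + t + (1 + t ^ 2)) := by
        gcongr
        exact integral_sq_ballCountErase_apply_le k
    _ ≤ 30 * (1 + t ^ 2) := by nlinarith [sq_nonneg (t - 1)]

end Variance

theorem variance_aTerm_sum_le_general (d : ℕ) {n m : ℕ} (hm : 2 ≤ m) :
    variance (fun ω : Fin n → Fin m =>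
        ∑ i : Fin m, ∑ j : Fin m, if i ≠ j then aTerm d n m ω i j else 0) (occ n m) ≤
      30 * n * (1 + ((n : ℝ) / m) ^ 2) := by
  have : NeZero m := ⟨by omega⟩
  simp only [← aSum_ballCount]
  calc variance (fun ω => aSum d (ballCount ω)) (occ n m)
      ≤ ∑ k, ∫ ω, (aSum d (ballCount ω) - aSum d (ballCountErase k ω)) ^ 2 ∂occ n m :=
        variance_occ_le_sum_integral_sq_sub fun k _ _ h =>
          congrArg (aSum d) (dependsOn_ballCountErase k h)
    _ ≤ ∑ _k : Fin n, 30 * (1 + ((n : ℝ) / m) ^ 2) :=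
        Finset.sum_le_sum fun k _ => integral_sq_aSum_ballCount_sub_le d hm k
    _ = 30 * n * (1 + ((n : ℝ) / m) ^ 2) := by
        rw [Finset.sum_const, Finset.card_univ, Fintype.card_fin, nsmul_eq_mul]
        ring

/-- Lemma 3.3, bound (3.14): `Var(Σ_{i≠j} a_{n,m}(i,j)) ≤ C·n·[1 + (n/m)⁴]`. -/
theorem variance_aTerm_sum_le (d : ℕ) (hd : 2 ≤ d) :
    ∃ (n₁ : ℕ) (r₁ C : ℝ), 0 < r₁ ∧ 0 < C ∧
      ∀ n m : ℕ, n₁ ≤ n → 2 ≤ m → r₁ ≤ occR d n m →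
        variance (fun ω : Fin n → Fin m =>
            ∑ i : Fin m, ∑ j : Fin m, if i ≠ j then aTerm d n m ω i j else 0)
          (occ n m)
        ≤ C * n * (1 + ((n : ℝ) / m) ^ 4) := by
  refine ⟨0, 1, 45, one_pos, by norm_num, fun n m _ hm _ =>
    (variance_aTerm_sum_le_general d hm).trans ?_⟩
  have : 0 ≤ n * ((((n : ℝ) / m) ^ 2 - 1) ^ 2 + 2 * ((n : ℝ) / m) ^ 4) := by positivity
  linarith
end

section
/- Let k, x, ℓ be nonnegative integers with 0 ≤ x ≤ k − ℓ, and let p ∈ (0,1]. Then C(k, x+ℓ)·p^x ≤ 2^k always, and if in addition k ≤ (ℓ+1)/p + ℓ, then C(k, x+ℓ)·p^x ≤ C(k, ℓ). -/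
/-!
For `m ≥ ℓ` the ratio `C(k, m + 1) / C(k, m) = (k - m) / (m + 1)` is at most `(k - ℓ) / (ℓ + 1)`,
so `x` steps up from `C(k, ℓ)` gain at most the factor `((k - ℓ) / (ℓ + 1)) ^ x`. The condition on
`k` says exactly that `p` times this ratio is at most `1`.
-/

theorem choose_add_mul_succ_pow_le (k x ℓ : ℕ) :
    k.choose (x + ℓ) * (ℓ + 1) ^ x ≤ k.choose ℓ * (k - ℓ) ^ x := by
  induction x with
  | zero => simp
  | succ x ih =>
    calc k.choose (x + 1 + ℓ) * (ℓ + 1) ^ (x + 1)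
        = k.choose (x + ℓ + 1) * (ℓ + 1) * (ℓ + 1) ^ x := by
          rw [Nat.add_right_comm, pow_succ', mul_assoc]
      _ ≤ k.choose (x + ℓ + 1) * (x + ℓ + 1) * (ℓ + 1) ^ x := by gcongr; omega
      _ = k.choose (x + ℓ) * (ℓ + 1) ^ x * (k - (x + ℓ)) := by
          rw [Nat.choose_succ_right_eq, mul_right_comm]
      _ ≤ k.choose ℓ * (k - ℓ) ^ x * (k - ℓ) := by gcongr; omega
      _ = k.choose ℓ * (k - ℓ) ^ (x + 1) := by rw [pow_succ, mul_assoc]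

section OrderedSemiring

variable {R : Type*} [CommSemiring R] [LinearOrder R] [IsStrictOrderedRing R] {p : R}

theorem choose_mul_pow_le_two_pow (k m x : ℕ) (hp : 0 ≤ p) (hp1 : p ≤ 1) :
    (k.choose m : R) * p ^ x ≤ 2 ^ k :=
  calc (k.choose m : R) * p ^ x
      ≤ k.choose m := mul_le_of_le_one_right (Nat.cast_nonneg _) (pow_le_one₀ hp hp1)
    _ ≤ 2 ^ k := mod_cast Nat.choose_le_two_pow k m

theorem choose_add_mul_pow_le_choose {k ℓ : ℕ} (x : ℕ) (hp : 0 ≤ p)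
    (hk : ((k - ℓ : ℕ) : R) * p ≤ ℓ + 1) :
    (k.choose (x + ℓ) : R) * p ^ x ≤ k.choose ℓ := by
  have hratio : (k.choose (x + ℓ) : R) * (ℓ + 1) ^ x ≤ k.choose ℓ * ((k - ℓ : ℕ) : R) ^ x :=
    mod_cast choose_add_mul_succ_pow_le k x ℓ
  have hpos : (0 : R) < (ℓ + 1) ^ x := by positivity
  refine le_of_mul_le_mul_right ?_ hpos
  calc (k.choose (x + ℓ) : R) * p ^ x * (ℓ + 1) ^ x
      = k.choose (x + ℓ) * (ℓ + 1) ^ x * p ^ x := mul_right_comm _ _ _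
    _ ≤ k.choose ℓ * ((k - ℓ : ℕ) : R) ^ x * p ^ x := by gcongr
    _ = k.choose ℓ * (((k - ℓ : ℕ) : R) * p) ^ x := by rw [mul_pow, mul_assoc]
    _ ≤ k.choose ℓ * (ℓ + 1) ^ x := by gcongr

end OrderedSemiring

theorem choose_mul_pow_le_general {K : Type*} [Field K] [LinearOrder K] [IsStrictOrderedRing K]
    (k x ℓ : ℕ) {p : K} (hp : 0 < p) :
    (p ≤ 1 → (k.choose (x + ℓ) : K) * p ^ x ≤ 2 ^ k) ∧
      ((k : K) ≤ ((ℓ : K) + 1) / p + ℓ →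
        (k.choose (x + ℓ) : K) * p ^ x ≤ (k.choose ℓ : K)) := by
  refine ⟨choose_mul_pow_le_two_pow k (x + ℓ) x hp.le, fun hk ↦ ?_⟩
  have hsub : ((k - ℓ : ℕ) : K) ≤ (ℓ + 1) / p := by
    rcases le_total k ℓ with hkℓ | hℓk
    · rw [Nat.sub_eq_zero_of_le hkℓ, Nat.cast_zero]
      positivity
    · rwa [Nat.cast_sub hℓk, sub_le_iff_le_add]
  exact choose_add_mul_pow_le_choose x hp.le ((le_div_iff₀ hp).mp hsub)

/-- The binomial coefficient bound (3.31): for nonnegative integers `x + ℓ ≤ k` and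
`p ∈ (0,1]`, `C(k, x+ℓ)·p^x ≤ 2^k` always, and `C(k, x+ℓ)·p^x ≤ C(k, ℓ)` when
`k ≤ (ℓ+1)/p + ℓ`. -/
theorem choose_mul_pow_le (k x ℓ : ℕ) (h : x + ℓ ≤ k) (p : ℝ) (hp : 0 < p)
    (hp1 : p ≤ 1) :
    (k.choose (x + ℓ) : ℝ) * p ^ x ≤ 2 ^ k ∧
      ((k : ℝ) ≤ ((ℓ : ℝ) + 1) / p + ℓ →
        (k.choose (x + ℓ) : ℝ) * p ^ x ≤ (k.choose ℓ : ℝ)) :=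
  (choose_mul_pow_le_general k x ℓ hp).imp_left fun hle ↦ hle hp1
end

section
/- Let d ≥ 2 be an integer. There exists an integer n₁, depending only on d, such that for all integers n ≥ n₁, all integers m ≥ 3 satisfying n/m ≤ 2 log m, and every integer l with 0 ≤ l ≤ ⌈√n⌉ and n − l ≥ d, the means of the uniform occupancy model satisfy μ_{n,m} ≤ 18·μ_{n−l, m−1}. -/
open MeasureTheory ProbabilityTheory

/-!
The mean is `μ_{n,m} = C(n,d) · m^(1-d) · (1 - 1/m)^(n-d)`, and its factors are compared separately.
Discarding `l` balls at most halves `C(n,d)` once `2dl ≤ n`, because it loses at most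
`l · C(n-1,d-1) = (dl/n) · C(n,d)` of the `d`-subsets. Discarding an urn changes the exponential
factor by a power of `(1 - 1/m) / (1 - 1/(m-1)) = 1 + 1/(m(m-2))`, which at the exponent
`n ≤ c m log m` is at most `exp (c log m / (m-2)) ≤ 3^c`.
-/

section Counting

variable {α β : Type*} [Fintype α] [Fintype β] [DecidableEq α] [DecidableEq β]

theorem card_filter_fiber_eq (b : β) (S : Finset α) :
    (Finset.univ.filter fun f : α → β => (Finset.univ.filter fun a => f a = b) = S).card
      = (Fintype.card β - 1) ^ (Fintype.card α - S.card) := by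
  have h_pi : (Finset.univ.filter fun f : α → β => (Finset.univ.filter fun a => f a = b) = S)
      = Fintype.piFinset fun a => if a ∈ S then {b} else Finset.univ.erase b := by
    ext f
    simp only [Finset.ext_iff, Finset.mem_filter, Finset.mem_univ, true_and, Fintype.mem_piFinset]
    refine forall_congr' fun a => ?_
    by_cases ha : a ∈ S <;> simp [ha]
  rw [h_pi, Fintype.card_piFinset]
  simp [apply_ite Finset.card, Finset.prod_ite, Finset.filter_notMem_eq_sdiff,
    Finset.card_sdiff_of_subset, Finset.card_univ]

theorem card_filter_card_fiber_eq (b : β) (d : ℕ) :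
    (Finset.univ.filter fun f : α → β => (Finset.univ.filter fun a => f a = b).card = d).card
      = (Fintype.card α).choose d * (Fintype.card β - 1) ^ (Fintype.card α - d) := by
  have h_fibers : ∀ S ∈ Finset.powersetCard d (Finset.univ : Finset α),
      ((Finset.univ.filter fun f : α → β => (Finset.univ.filter fun a => f a = b).card = d).filter
        fun f => (Finset.univ.filter fun a => f a = b) = S).card
          = (Fintype.card β - 1) ^ (Fintype.card α - d) := by
    intro S hS
    have hSd : S.card = d := (Finset.mem_powersetCard.mp hS).2
    rw [Finset.filter_filter, ← hSd, ← card_filter_fiber_eq b S]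
    congr 1
    exact Finset.filter_congr fun f _ => and_iff_right_of_imp (congrArg Finset.card)
  rw [Finset.card_eq_sum_card_fiberwise (t := Finset.powersetCard d Finset.univ)
    (f := fun f : α → β => Finset.univ.filter fun a => f a = b)
    fun f hf => by simpa using hf, Finset.sum_congr rfl h_fibers]
  simp [Finset.card_univ]

end Counting

section OccupancyMean

variable (d n m : ℕ)

theorem integral_occ (f : (Fin n → Fin m) → ℝ) :
    ∫ ω, f ω ∂(occ n m) = (∑ ω, f ω) / (m : ℝ) ^ n := by
  rw [occ, integral_smul_measure, integral_count]
  simp [div_eq_inv_mul]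

theorem card_filter_ballCount_eq (i : Fin m) :
    (Finset.univ.filter fun ω : Fin n → Fin m => ballCount ω i = d).card
      = n.choose d * (m - 1) ^ (n - d) := by
  have h_card := card_filter_card_fiber_eq (α := Fin n) i d
  rwa [Fintype.card_fin, Fintype.card_fin] at h_card

theorem sum_urnCount :
    ∑ ω : Fin n → Fin m, urnCount d ω = m * (n.choose d * (m - 1) ^ (n - d)) := by
  calc ∑ ω : Fin n → Fin m, urnCount d ω
      = ∑ i : Fin m, (Finset.univ.filter fun ω : Fin n → Fin m => ballCount ω i = d).card := by
        simp only [urnCount, Finset.card_filter]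
        exact Finset.sum_comm
    _ = m * (n.choose d * (m - 1) ^ (n - d)) := by
        simp [card_filter_ballCount_eq]

theorem occMean_eq :
    occMean d n m = n.choose d * (m * (m : ℝ)⁻¹ ^ d) * (1 - (m : ℝ)⁻¹) ^ (n - d) := by
  rw [occMean, integral_occ, ← Nat.cast_sum, sum_urnCount]
  rcases lt_or_ge n d with hnd | hdn
  · simp [Nat.choose_eq_zero_of_lt hnd]
  rcases m.eq_zero_or_pos with rfl | hm
  · simp
  have hm' : (m : ℝ) ≠ 0 := by positivity
  have h_one_sub : 1 - (m : ℝ)⁻¹ = ((m : ℝ) - 1) * (m : ℝ)⁻¹ := by field_simp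
  have h_pow : (m : ℝ)⁻¹ ^ n = (m : ℝ)⁻¹ ^ d * (m : ℝ)⁻¹ ^ (n - d) := by
    rw [← pow_add, Nat.add_sub_cancel' hdn]
  rw [h_one_sub, mul_pow, div_eq_mul_inv, ← inv_pow, h_pow]
  push_cast [Nat.cast_sub hm]
  ring

end OccupancyMean

theorem choose_succ_le_choose_sub_add (n l k : ℕ) :
    n.choose (k + 1) ≤ (n - l).choose (k + 1) + l * (n - 1).choose k := by
  induction l with
  | zero => simp
  | succ l ih =>
    obtain h_zero | ⟨j, hj⟩ : n - l = 0 ∨ ∃ j, n - l = j + 1 := by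
      cases n - l <;> simp
    · grw [ih, h_zero, show n - (l + 1) = 0 by omega, Nat.le_succ l]
    · have h_mono : j.choose k ≤ (n - 1).choose k := Nat.choose_le_choose k (by omega)
      rw [hj, Nat.choose_succ_succ] at ih
      rw [show n - (l + 1) = j by omega]
      linarith

theorem choose_le_two_mul_choose_sub {d n l : ℕ} (h : 2 * d * l ≤ n) :
    n.choose d ≤ 2 * (n - l).choose d := by
  rcases d with _ | k
  · simp
  rcases n with _ | n
  · simp
  have h_loss : (n + 1) * (n + 1).choose (k + 1)
      ≤ (n + 1) * (n + 1 - l).choose (k + 1) + (k + 1) * l * (n + 1).choose (k + 1) := calc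
    (n + 1) * (n + 1).choose (k + 1)
        ≤ (n + 1) * ((n + 1 - l).choose (k + 1) + l * n.choose k) :=
          Nat.mul_le_mul_left _ (choose_succ_le_choose_sub_add (n + 1) l k)
    _ = (n + 1) * (n + 1 - l).choose (k + 1) + l * ((n + 1) * n.choose k) := by ring
    _ = (n + 1) * (n + 1 - l).choose (k + 1) + (k + 1) * l * (n + 1).choose (k + 1) := by
          rw [Nat.add_one_mul_choose_eq]
          ring
  have h_half := Nat.mul_le_mul_right ((n + 1).choose (k + 1)) h
  refine Nat.le_of_mul_le_mul_left ?_ n.succ_pos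
  linarith

theorem log_le_sub_two_mul_log_three {x : ℝ} (hx : 3 ≤ x) :
    Real.log x ≤ (x - 2) * Real.log 3 := by
  have h_bernoulli : x ≤ 3 ^ (x - 2) := by
    have := one_add_mul_self_le_rpow_one_add (s := 2) (by norm_num) (p := x - 2) (by linarith)
    norm_num at this
    linarith
  rw [← Real.log_rpow (by norm_num)]
  exact Real.log_le_log (by linarith) h_bernoulli

theorem one_sub_inv_pow_le {x c : ℝ} {N : ℕ} (hx : 3 ≤ x) (h : N / x ≤ c * Real.log x) :
    (1 - x⁻¹) ^ N ≤ 3 ^ c * (1 - (x - 1)⁻¹) ^ N := by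
  have hx₁ : 0 < x - 1 := by linarith
  have hx₂ : 0 < x - 2 := by linarith
  have hc : 0 ≤ c :=
    nonneg_of_mul_nonneg_left (le_trans (by positivity) h) (Real.log_pos (by linarith))
  have h_factor : 1 - x⁻¹ = ((x * (x - 2))⁻¹ + 1) * (1 - (x - 1)⁻¹) := by
    field_simp
    ring
  have h_exponent : N * (x * (x - 2))⁻¹ ≤ Real.log 3 * c := calc
    N * (x * (x - 2))⁻¹ = N / x / (x - 2) := by field_simp
    _ ≤ c * ((x - 2) * Real.log 3) / (x - 2) := by
      grw [h, log_le_sub_two_mul_log_three hx]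
    _ = Real.log 3 * c := by field_simp
  have h_three : ((x * (x - 2))⁻¹ + 1) ^ N ≤ 3 ^ c := calc
    ((x * (x - 2))⁻¹ + 1) ^ N ≤ Real.exp (x * (x - 2))⁻¹ ^ N := by
      gcongr
      exact Real.add_one_le_exp _
    _ = Real.exp (N * (x * (x - 2))⁻¹) := (Real.exp_nat_mul _ _).symm
    _ ≤ Real.exp (Real.log 3 * c) := Real.exp_le_exp.mpr h_exponent
    _ = 3 ^ c := (Real.rpow_def_of_pos (by norm_num) c).symm
  have h_nonneg : 0 ≤ 1 - (x - 1)⁻¹ := sub_nonneg.mpr (inv_le_one_of_one_le₀ (by linarith))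
  rw [h_factor, mul_pow]
  gcongr

theorem choose_mul_mul_inv_pow_le {d n l : ℕ} {x : ℝ} (hx : 2 ≤ x) (h : 2 * d * l ≤ n) :
    n.choose d * (x * x⁻¹ ^ d) ≤ 2 * ((n - l).choose d * ((x - 1) * (x - 1)⁻¹ ^ d)) := by
  rcases d with _ | k
  · norm_num
    linarith
  have h_cancel : ∀ y : ℝ, 0 < y → y * y⁻¹ ^ (k + 1) = y⁻¹ ^ k := fun y hy => by
    rw [pow_succ', mul_inv_cancel_left₀ hy.ne']
  have h_choose : (n.choose (k + 1) : ℝ) ≤ 2 * (n - l).choose (k + 1) := by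
    exact_mod_cast choose_le_two_mul_choose_sub h
  rw [h_cancel x (by linarith), h_cancel (x - 1) (by linarith), ← mul_assoc]
  have hx₁ : 0 < x - 1 := by linarith
  gcongr
  linarith

theorem occMean_le_mul_occMean_sub {d n m l : ℕ} {c : ℝ} (hm : 3 ≤ m) (hl : 2 * d * l ≤ n)
    (hc : (n : ℝ) / m ≤ c * Real.log m) :
    occMean d n m ≤ 2 * 3 ^ c * occMean d (n - l) (m - 1) := by
  have hm' : (3 : ℝ) ≤ m := by exact_mod_cast hm
  have h_one_sub : 0 ≤ 1 - (m : ℝ)⁻¹ := sub_nonneg.mpr (inv_le_one_of_one_le₀ (by linarith))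
  have h_one_sub_le : 1 - (m : ℝ)⁻¹ ≤ 1 := sub_le_self _ (by positivity)
  have h_exponent : ((n - l - d : ℕ) : ℝ) / m ≤ c * Real.log m :=
    le_trans (by gcongr; omega) hc
  have h_pow := one_sub_inv_pow_le hm' h_exponent
  rw [occMean_eq, occMean_eq, Nat.cast_sub (by omega), Nat.cast_one]
  calc n.choose d * (m * (m : ℝ)⁻¹ ^ d) * (1 - (m : ℝ)⁻¹) ^ (n - d)
      ≤ n.choose d * (m * (m : ℝ)⁻¹ ^ d) * (1 - (m : ℝ)⁻¹) ^ (n - l - d) :=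
        mul_le_mul_of_nonneg_left
          (pow_le_pow_of_le_one h_one_sub h_one_sub_le (by omega)) (by positivity)
    _ ≤ 2 * ((n - l).choose d * ((m - 1) * ((m : ℝ) - 1)⁻¹ ^ d))
          * (3 ^ c * (1 - ((m : ℝ) - 1)⁻¹) ^ (n - l - d)) :=
        mul_le_mul_of_nonneg (choose_mul_mul_inv_pow_le (by linarith) hl)
          h_pow (by positivity) ((pow_nonneg h_one_sub _).trans h_pow)
    _ = _ := by ring

theorem mul_le_of_le_ceil_sqrt {k n l : ℕ} (hn : (k + 1) ^ 2 ≤ n) (hl : l ≤ ⌈√(n : ℝ)⌉₊) :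
    k * l ≤ n := by
  have h_sqrt : (k + 1 : ℝ) ≤ √n := Real.le_sqrt_of_sq_le (by exact_mod_cast hn)
  have hl' : (l : ℝ) ≤ √n + 1 :=
    (Nat.cast_le.mpr hl).trans (Nat.ceil_lt_add_one (Real.sqrt_nonneg _)).le
  have h_real : (k * l : ℝ) ≤ n := calc
    (k * l : ℝ) ≤ k * (√n + 1) := by gcongr
    _ ≤ (k + 1) * √n := by linarith
    _ ≤ √n * √n := by gcongr
    _ = n := Real.mul_self_sqrt n.cast_nonneg
  exact_mod_cast h_real

theorem occupancy_mean_reduction_general (d : ℕ) :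
    ∃ n₁ : ℕ, ∀ (c : ℝ) (n m : ℕ), n₁ ≤ n → 3 ≤ m → (n : ℝ) / m ≤ c * Real.log m →
      ∀ l : ℕ, l ≤ ⌈Real.sqrt n⌉₊ →
        occMean d n m ≤ 2 * 3 ^ c * occMean d (n - l) (m - 1) :=
  ⟨(2 * d + 1) ^ 2, fun _ _ _ hn hm hc _ hl =>
    occMean_le_mul_occMean_sub hm (mul_le_of_le_ceil_sqrt hn hl) hc⟩

/-- Inequality (3.19): there is `n₁` depending only on `d ≥ 2` such that for all
`n ≥ n₁`, `m ≥ 3` with `n/m ≤ 2 log m`, and all `0 ≤ l ≤ ⌈√n⌉` with `n − l ≥ d`,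
`μ_{n,m} ≤ 18·μ_{n−l, m−1}`. -/
theorem occupancy_mean_reduction (d : ℕ) (hd : 2 ≤ d) :
    ∃ n₁ : ℕ, ∀ n m : ℕ, n₁ ≤ n → 3 ≤ m → (n : ℝ) / m ≤ 2 * Real.log m →
      ∀ l : ℕ, l ≤ ⌈Real.sqrt n⌉₊ → d ≤ n - l →
        occMean d n m ≤ 18 * occMean d (n - l) (m - 1) := by
  obtain ⟨n₁, h⟩ := occupancy_mean_reduction_general d
  exact ⟨n₁, fun n m hn hm hnm l hl _ => by convert h 2 n m hn hm hnm l hl; norm_num⟩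
end
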